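/- Let n = Δ·s with Δ, s positive integers, 0 ≤ t_d ≤ Δ−1, P_x > 0, γ > 0, σ_x² = P_x/n, and let F_Ω be the first s columns of the n-point DFT matrix, with static channel h_t = 1. Define err(a) = tr[((s/P_x) I_s + γ F_Ω† diag(a_t) F_Ω)⁻¹]. Let a* ∈ ℝ^n be the allocation with a*_{Δr+t_d} = E_tot/(s σ_x²) for r = 0,…,s−1 and a*_t = 0 otherwise. Then err(a*) = P_x/(1 + γ E_tot/s), and for every a ∈ ℝ^n with a_t ≥ 0 and Σ_{t} a_t σ_x² = E_tot one has err(a) ≥ err(a*). In particular, if a* is feasible for the energy causality constraints, it is an optimal strategy for the full energy-harvesting problem. -/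

import Mathlib

open Matrix
open scoped ComplexOrder

/-!
For a positive definite matrix `M`, taking traces in `(1 - c M)ᴴ M⁻¹ (1 - c M) ≥ 0` with
`c = d / tr M` gives `tr M⁻¹ ≥ d² / tr M`, where `d` is the dimension. Apply this to the matrix
`M` inside the error. All rows of `F_Ω` have the same energy, so `tr M` depends on the allocation
only through its total energy and the bound is the same for all competitors. Equidistant samples
turn the columns of `F_Ω` into orthogonal vectors, so for the uniform allocation `M` is scalar and
the bound is attained. Orthogonality only needs as many samples as columns, hence optimality
persists when the source is oversampled.
-/

section TraceInv

variable {ι K : Type*} [Fintype ι] [DecidableEq ι] [Field K] [PartialOrder K] [StarRing K]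
  [StarOrderedRing K] {M : Matrix ι ι K}

theorem two_mul_card_sub_sq_mul_trace_le_trace_inv (hM : M.PosDef) {c : K}
    (hc : IsSelfAdjoint c) :
    2 * c * Fintype.card ι - c ^ 2 * M.trace ≤ M⁻¹.trace := by
  have hdet : IsUnit M.det := (isUnit_iff_isUnit_det M).1 hM.isUnit
  have hherm : (1 - c • M)ᴴ = 1 - c • M := by
    simp [hM.isHermitian.eq, hc.star_eq]
  have hexpand : (1 - c • M)ᴴ * M⁻¹ * (1 - c • M) = M⁻¹ - (2 * c) • 1 + c ^ 2 • M := by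
    simp only [hherm, sub_mul, mul_sub, one_mul, mul_one, smul_mul_assoc, mul_smul_comm,
      mul_nonsing_inv M hdet, nonsing_inv_mul M hdet]
    module
  have htrace : 0 ≤ M⁻¹.trace - (2 * c * Fintype.card ι - c ^ 2 * M.trace) := by
    calc 0 ≤ ((1 - c • M)ᴴ * M⁻¹ * (1 - c • M)).trace :=
          (hM.inv.posSemidef.conjTranspose_mul_mul_same _).trace_nonneg
      _ = M⁻¹.trace - (2 * c * Fintype.card ι - c ^ 2 * M.trace) := by
          rw [hexpand, trace_add, trace_sub, trace_smul, trace_smul, trace_one, smul_eq_mul,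
            smul_eq_mul]
          ring
  exact sub_nonneg.1 htrace

theorem card_sq_div_trace_le_trace_inv (hM : M.PosDef) :
    (Fintype.card ι : K) ^ 2 / M.trace ≤ M⁻¹.trace := by
  have hc : IsSelfAdjoint ((Fintype.card ι : K) / M.trace) :=
    (IsSelfAdjoint.natCast _).div (IsSelfAdjoint.of_nonneg hM.posSemidef.trace_nonneg)
  refine le_of_eq_of_le ?_ (two_mul_card_sub_sq_mul_trace_le_trace_inv hM hc)
  obtain htr | htr := eq_or_ne M.trace 0
  · simp [htr]
  · field_simp
    ring

end TraceInv

section Sampling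

variable {τ ι ι' κ R : Type*} [Fintype τ] [DecidableEq τ]

theorem trace_mul_diagonal_mul [NonUnitalCommSemiring R] [Fintype ι] (A : Matrix ι τ R) (d : τ → R)
    (B : Matrix τ ι R) : (A * diagonal d * B).trace = ∑ t, (B * A) t t * d t := by
  rw [trace_mul_comm, ← Matrix.mul_assoc]
  simp only [trace, diag_apply, mul_diagonal]

theorem mul_diagonal_mul_eq_submatrix [NonUnitalNonAssocSemiring R] [Fintype κ] [DecidableEq κ]
    (A : Matrix ι τ R) {d : τ → R} (B : Matrix τ ι' R) {e : κ → τ} (he : Function.Injective e)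
    (hd : ∀ t ∉ Set.range e, d t = 0) :
    A * diagonal d * B = A.submatrix id e * diagonal (d ∘ e) * B.submatrix e id := by
  ext i j
  rw [mul_apply, mul_apply]
  simp only [mul_diagonal, submatrix_apply, id_eq, Function.comp_apply]
  refine (Fintype.sum_of_injective e he _ _ (fun t ht => ?_) fun _ => rfl).symm
  rw [hd t ht, mul_zero, zero_mul]

end Sampling

section MMSE

variable {τ ι : Type*} [Fintype τ] [DecidableEq τ] [DecidableEq ι]

/-- The inverse error covariance `ρ I + γ Fᴴ diag(a) F` when a vector `w` with covariance `ρ⁻¹ I`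
is estimated from samples of `F w`, the sample at time `t` being sent with power gain `a t` over a
channel whose noise has variance `γ⁻¹`. -/
noncomputable def errorPrecision (ρ γ : ℝ) (F : Matrix τ ι ℂ) (a : τ → ℝ) : Matrix ι ι ℂ :=
  ρ • 1 + (γ : ℂ) • (Fᴴ * diagonal (fun t => (a t : ℂ)) * F)

/-- The minimum mean-square error of the allocation `a`, `err(a)` in the paper: the trace of the
error covariance in its Woodbury form. It is left in the scalar field `ℂ` of `F`; `z ≤ w` in
`ℂ` includes the equality of the imaginary parts. -/
noncomputable def mmse [Fintype ι] (ρ γ : ℝ) (F : Matrix τ ι ℂ) (a : τ → ℝ) : ℂ :=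
  (errorPrecision ρ γ F a)⁻¹.trace

variable {ρ γ : ℝ} {F : Matrix τ ι ℂ} {a : τ → ℝ}

theorem posDef_errorPrecision [Finite ι] (hρ : 0 < ρ) (hγ : 0 ≤ γ) (ha : ∀ t, 0 ≤ a t) :
    (errorPrecision ρ γ F a).PosDef := by
  have hdiag : (diagonal fun t => (a t : ℂ)).PosSemidef :=
    PosSemidef.diagonal fun t => Complex.zero_le_real.2 (ha t)
  exact (PosDef.one.smul hρ).add_posSemidef
    ((hdiag.conjTranspose_mul_mul_same F).smul (Complex.zero_le_real.2 hγ))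

variable [Fintype ι]

theorem trace_errorPrecision {c : ℝ} (hF : ∀ t, (F * Fᴴ) t t = c) :
    (errorPrecision ρ γ F a).trace = ((Fintype.card ι * ρ + γ * (c * ∑ t, a t) : ℝ) : ℂ) := by
  rw [errorPrecision, trace_add, trace_smul, trace_smul, trace_one, trace_mul_diagonal_mul]
  simp only [hF, ← Finset.mul_sum, Complex.real_smul, smul_eq_mul]
  push_cast
  ring

theorem card_sq_div_le_mmse (hρ : 0 < ρ) (hγ : 0 ≤ γ) (ha : ∀ t, 0 ≤ a t) {c : ℝ}
    (hF : ∀ t, (F * Fᴴ) t t = c) :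
    (((Fintype.card ι : ℝ) ^ 2 / (Fintype.card ι * ρ + γ * (c * ∑ t, a t)) : ℝ) : ℂ)
      ≤ mmse ρ γ F a := by
  have h := card_sq_div_trace_le_trace_inv (posDef_errorPrecision (F := F) hρ hγ ha)
  rw [trace_errorPrecision hF] at h
  exact_mod_cast h

theorem mmse_eq_of_eq_smul_one {β : ℝ} (h : ρ + γ * β ≠ 0)
    (hF : Fᴴ * diagonal (fun t => (a t : ℂ)) * F = (β : ℂ) • 1) :
    mmse ρ γ F a = ((Fintype.card ι / (ρ + γ * β) : ℝ) : ℂ) := by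
  have hscalar : errorPrecision ρ γ F a = ((ρ + γ * β : ℝ) : ℂ) • 1 := by
    rw [errorPrecision, hF, ← Complex.coe_smul, smul_smul, ← add_smul]
    push_cast
    rfl
  have hinv : (errorPrecision ρ γ F a)⁻¹ = ((ρ + γ * β : ℝ) : ℂ)⁻¹ • 1 := by
    refine inv_eq_right_inv ?_
    rw [hscalar, smul_mul_smul_comm, one_mul, mul_inv_cancel₀ (Complex.ofReal_ne_zero.2 h),
      one_smul]
  rw [mmse, hinv, trace_smul, trace_one, smul_eq_mul]
  push_cast
  ring

end MMSE

theorem sum_zpow_pow_eq_ite {K : Type*} [Field K] {ζ : K} {N : ℕ} (hζ : IsPrimitiveRoot ζ N)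
    (m : ℤ) : ∑ r : Fin N, (ζ ^ m) ^ (r : ℕ) = if (N : ℤ) ∣ m then (N : K) else 0 := by
  rw [Fin.sum_univ_eq_sum_range]
  split_ifs with hm
  · simp [(hζ.zpow_eq_one_iff_dvd m).2 hm]
  · have hpow : (ζ ^ m) ^ N = 1 := by
      rw [← zpow_natCast, zpow_comm, zpow_natCast, hζ.pow_eq_one, _root_.one_zpow]
    rw [geom_sum_eq (mt (hζ.zpow_eq_one_iff_dvd m).1 hm), hpow, sub_self, zero_div]

/-- The first `s` columns of the unitary `n`-point discrete Fourier transform, `F_Ω` in the paper.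
Rows are times and columns are frequencies, both numbered from `0`. -/
noncomputable def partialDFT (n s : ℕ) : Matrix (Fin n) (Fin s) ℂ :=
  of fun t k => ((1 / Real.sqrt n : ℝ) : ℂ) *
    Complex.exp (-(2 * (Real.pi : ℂ) * Complex.I * (t.1 : ℂ) * (k.1 : ℂ)) / (n : ℂ))

section PartialDFT

variable {n s : ℕ}

theorem star_partialDFT_mul_partialDFT (t : Fin n) (k l : Fin s) :
    star (partialDFT n s t k) * partialDFT n s t l
      = (n : ℂ)⁻¹ * Complex.exp (2 * Real.pi * Complex.I / n) ^ ((t : ℤ) * ((k : ℤ) - l)) := by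
  have hsq : ((1 / Real.sqrt n : ℝ) : ℂ) * ((1 / Real.sqrt n : ℝ) : ℂ) = (n : ℂ)⁻¹ := by
    rw [← Complex.ofReal_mul, div_mul_div_comm, Real.mul_self_sqrt n.cast_nonneg]
    push_cast
    ring
  rw [partialDFT, of_apply, of_apply, star_mul', mul_mul_mul_comm, Complex.star_def,
    Complex.conj_ofReal, hsq, ← Complex.exp_conj, ← Complex.exp_add,
    ← Complex.exp_int_mul]
  simp only [map_div₀, map_neg, map_mul, Complex.conj_ofReal, Complex.conj_I,
    Complex.conj_natCast, map_ofNat]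
  congr 2
  push_cast
  ring

theorem partialDFT_mul_conjTranspose_apply_self (t : Fin n) :
    (partialDFT n s * (partialDFT n s)ᴴ) t t = ((s / n : ℝ) : ℂ) := by
  simp only [mul_apply, conjTranspose_apply, mul_comm _ (star _), star_partialDFT_mul_partialDFT,
    sub_self, mul_zero, zpow_zero, mul_one, Finset.sum_const, Finset.card_univ, Fintype.card_fin,
    nsmul_eq_mul]
  push_cast
  rfl

variable {Δ N td : ℕ} {idx : Fin N → Fin n}

theorem conjTranspose_mul_self_partialDFT_submatrix (hn : n = Δ * N) (hsN : s ≤ N)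
    (hidx : ∀ r, (idx r : ℕ) = Δ * r + td) :
    ((partialDFT n s).submatrix idx id)ᴴ * (partialDFT n s).submatrix idx id
      = ((N / n : ℝ) : ℂ) • 1 := by
  ext k l
  have hn0 : 0 < n := (idx (k.castLE hsN)).pos
  set ζ := Complex.exp (2 * Real.pi * Complex.I / n) with hζ_def
  have hζ : IsPrimitiveRoot ζ n := Complex.isPrimitiveRoot_exp n hn0.ne'
  have hentry (r : Fin N) : star (partialDFT n s (idx r) k) * partialDFT n s (idx r) l
      = (n : ℂ)⁻¹ * ζ ^ (td * ((k : ℤ) - l)) * ((ζ ^ Δ) ^ ((k : ℤ) - l)) ^ (r : ℕ) := by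
    rw [star_partialDFT_mul_partialDFT, ← hζ_def, hidx, mul_assoc, ← zpow_natCast ζ Δ,
      ← zpow_natCast _ (r : ℕ), ← _root_.zpow_mul, ← _root_.zpow_mul,
      ← zpow_add₀ (hζ.ne_zero hn0.ne')]
    congr 2
    push_cast
    ring
  have hdvd : (N : ℤ) ∣ (k : ℤ) - l ↔ k = l := by
    rw [← Nat.modEq_iff_dvd]
    refine ⟨fun h => ?_, fun h => h ▸ rfl⟩
    exact (Fin.ext (h.eq_of_lt_of_lt (l.2.trans_le hsN) (k.2.trans_le hsN))).symm
  simp only [mul_apply, conjTranspose_apply, submatrix_apply, id_eq, hentry]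
  rw [← Finset.mul_sum, sum_zpow_pow_eq_ite (hζ.pow hn0 hn), Matrix.smul_apply, one_apply]
  simp only [hdvd]
  split_ifs with hkl
  · subst hkl
    rw [sub_self, mul_zero, zpow_zero, smul_eq_mul]
    push_cast
    ring
  · simp

theorem conjTranspose_mul_diagonal_mul_partialDFT (hn : n = Δ * N) (hΔ : 0 < Δ) (hsN : s ≤ N)
    (hidx : ∀ r, (idx r : ℕ) = Δ * r + td) {a : Fin n → ℝ} {c : ℝ} (ha : ∀ r, a (idx r) = c)
    (ha₀ : ∀ t, (∀ r, t ≠ idx r) → a t = 0) :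
    (partialDFT n s)ᴴ * diagonal (fun t => (a t : ℂ)) * partialDFT n s
      = ((c * (N / n) : ℝ) : ℂ) • 1 := by
  have hinj : Function.Injective idx := fun r r' h => by
    have hval : Δ * (r : ℕ) + td = Δ * r' + td := by rw [← hidx, ← hidx, h]
    exact Fin.ext (Nat.eq_of_mul_eq_mul_left hΔ (Nat.add_right_cancel hval))
  have hsupp : ∀ t ∉ Set.range idx, (a t : ℂ) = 0 := fun t ht => by
    rw [ha₀ t fun r h => ht ⟨r, h.symm⟩, Complex.ofReal_zero]
  have hconst : diagonal ((fun t => (a t : ℂ)) ∘ idx) = (c : ℂ) • 1 := by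
    rw [smul_one_eq_diagonal]
    exact congrArg diagonal (funext fun r => congrArg _ (ha r))
  rw [mul_diagonal_mul_eq_submatrix _ _ hinj hsupp, hconst, Matrix.mul_smul, Matrix.mul_one,
    Matrix.smul_mul, ← conjTranspose_submatrix,
    conjTranspose_mul_self_partialDFT_submatrix hn hsN hidx, smul_smul, ← Complex.ofReal_mul]

end PartialDFT

theorem stmt15_general {Δ N s n td : ℕ} (hs : 0 < s) (hsN : s ≤ N) (hn : n = Δ * N)
    {Px γ Etot σx2 : ℝ} (hPx : 0 < Px) (hγ : 0 ≤ γ) (hEtot : 0 ≤ Etot) (hσ : σx2 = Px / n)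
    {idx : Fin N → Fin n} (hidx : ∀ r, (idx r : ℕ) = Δ * r + td)
    {astar : Fin n → ℝ} (hastar1 : ∀ r, astar (idx r) = Etot / (N * σx2))
    (hastar2 : ∀ t, (∀ r, t ≠ idx r) → astar t = 0) :
    mmse (s / Px) γ (partialDFT n s) astar = ((Px / (1 + γ * Etot / s) : ℝ) : ℂ) ∧
    ∀ a : Fin n → ℝ, (∀ t, 0 ≤ a t) → ∑ t, a t * σx2 = Etot →
      mmse (s / Px) γ (partialDFT n s) astar ≤ mmse (s / Px) γ (partialDFT n s) a := by
  have hN : 0 < N := hs.trans_le hsN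
  have hn0 : 0 < n := (idx ⟨0, hN⟩).pos
  have hΔ : 0 < Δ := Nat.pos_of_mul_pos_right (hn ▸ hn0)
  have hs' : (0 : ℝ) < s := Nat.cast_pos.2 hs
  have hscalar := conjTranspose_mul_diagonal_mul_partialDFT hn hΔ hsN hidx hastar1 hastar2
  have hβ : Etot / (N * σx2) * (N / n) = Etot / Px := by
    rw [hσ]
    field_simp
  rw [hβ] at hscalar
  have hval : mmse (s / Px) γ (partialDFT n s) astar = ((Px / (1 + γ * Etot / s) : ℝ) : ℂ) := by
    rw [mmse_eq_of_eq_smul_one (by positivity) hscalar, Fintype.card_fin]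
    congr 1
    field_simp
  refine ⟨hval, fun a ha hsum => ?_⟩
  have hbound := card_sq_div_le_mmse (div_pos hs' hPx) hγ ha
    (partialDFT_mul_conjTranspose_apply_self (s := s))
  have htotal : s / n * ∑ t, a t = s * (Etot / Px) := by
    rw [← hsum, ← Finset.sum_mul, hσ]
    field_simp
  rw [htotal, Fintype.card_fin] at hbound
  refine hval.trans_le (le_of_eq_of_le ?_ hbound)
  congr 1
  field_simp

/-- paper's Corollary 4: for a sampled low-pass c.w.s.s. source
(`F_Ω` the first `s` columns of the `n`-point DFT, `n = Δ·s`, static channel),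
the allocation `a*` that is uniform over the equidistant samples
(`a*_{Δr+t_d} = E_tot/(s σ_x²)`, zero otherwise) achieves
`err(a*) = P_x/(1 + γ E_tot/s)`, is optimal among all allocations with total
energy `E_tot`, and in particular is optimal for the full energy-harvesting
problem whenever it satisfies the energy causality constraints. -/
theorem stmt15 (Δ s : ℕ) (hΔ : 0 < Δ) (hs : 0 < s) (td : ℕ) (htd : td < Δ)
    (n : ℕ) (hn : n = Δ * s)
    (Px γ Etot : ℝ) (hPx : 0 < Px) (hγ : 0 < γ) (hEtot : 0 ≤ Etot)
    (σx2 : ℝ) (hσ : σx2 = Px / n)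
    (FΩ : Matrix (Fin n) (Fin s) ℂ)
    (hFΩ : ∀ (t : Fin n) (k : Fin s),
      FΩ t k = ((1 / Real.sqrt n : ℝ) : ℂ) *
        Complex.exp (-(2 * (Real.pi : ℂ) * Complex.I * (t.1 : ℂ) * (k.1 : ℂ)) / (n : ℂ)))
    (idx : Fin s → Fin n) (hidx : ∀ r, (idx r : ℕ) = Δ * r.1 + td)
    (astar : Fin n → ℝ)
    (hastar1 : ∀ r, astar (idx r) = Etot / (s * σx2))
    (hastar2 : ∀ t : Fin n, (∀ r, t ≠ idx r) → astar t = 0) :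
    Matrix.trace
        ((((s : ℝ) / Px : ℝ) • (1 : Matrix (Fin s) (Fin s) ℂ)
            + (γ : ℂ) • (FΩᴴ * Matrix.diagonal (fun t => (astar t : ℂ)) * FΩ))⁻¹)
      = ((Px / (1 + γ * Etot / s) : ℝ) : ℂ)
    ∧ (∀ a : Fin n → ℝ, (∀ t, 0 ≤ a t) → (∑ t, a t * σx2 = Etot) →
        Matrix.trace
            ((((s : ℝ) / Px : ℝ) • (1 : Matrix (Fin s) (Fin s) ℂ)
                + (γ : ℂ) • (FΩᴴ * Matrix.diagonal (fun t => (astar t : ℂ)) * FΩ))⁻¹)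
          ≤ Matrix.trace
              ((((s : ℝ) / Px : ℝ) • (1 : Matrix (Fin s) (Fin s) ℂ)
                  + (γ : ℂ) • (FΩᴴ * Matrix.diagonal (fun t => (a t : ℂ)) * FΩ))⁻¹))
    ∧ (∀ E : Fin n → ℝ, (∀ t, 0 ≤ E t) → (∑ t, E t = Etot) →
        (∀ t : Fin n, ∑ l ∈ Finset.Iic t, astar l * σx2 ≤ ∑ l ∈ Finset.Iic t, E l) →
        ∀ a : Fin n → ℝ, (∀ t, 0 ≤ a t) →
          (∀ t : Fin n, ∑ l ∈ Finset.Iic t, a l * σx2 ≤ ∑ l ∈ Finset.Iic t, E l) →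
          (∑ t, a t * σx2 = Etot) →
          Matrix.trace
              ((((s : ℝ) / Px : ℝ) • (1 : Matrix (Fin s) (Fin s) ℂ)
                  + (γ : ℂ) • (FΩᴴ * Matrix.diagonal (fun t => (astar t : ℂ)) * FΩ))⁻¹)
            ≤ Matrix.trace
                ((((s : ℝ) / Px : ℝ) • (1 : Matrix (Fin s) (Fin s) ℂ)
                    + (γ : ℂ) • (FΩᴴ * Matrix.diagonal (fun t => (a t : ℂ)) * FΩ))⁻¹)) := by
  obtain rfl : FΩ = partialDFT n s := Matrix.ext hFΩ
  obtain ⟨hval, hopt⟩ := stmt15_general hs le_rfl hn hPx hγ.le hEtot hσ hidx hastar1 hastar2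
  exact ⟨hval, hopt, fun _ _ _ _ a ha _ hsum => hopt a ha hsum⟩
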